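/- arXiv:1611.02249 — 3 statements merged into one kernel-verified Lean document; each statement's English description precedes it below -/
import Mathlib

section
/- Let T be Douthett's parsimonious relation P_{2,0} on the 28-element set H of major, minor, and augmented triads. The submonoid of the monoid of binary relations on H generated by T has exactly 4 elements; equivalently, the relations 1, T, T², T³ are pairwise distinct and T⁴ = T³. -/
/-- The 28-element set of the 24 major and minor triads and the 4 augmented triads:
`Sum.inl n` is the major triad `n_M`, `Sum.inr (Sum.inl n)` is the minor triad `n_m`,
and `Sum.inr (Sum.inr k)` is the augmented triad `k_aug`. -/
abbrev Htriads : Type := (ZMod 12) ⊕ (ZMod 12) ⊕ (ZMod 4)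

/-- Binary relations on `Htriads`. -/
abbrev MRel : Type := Htriads → Htriads → Prop

/-- The monoid of binary relations on `Htriads`: `r * s` relates `x` to `z` iff there is `y`
with `x r y` and `y s z` (i.e. first apply `r`, then `s`), and `1` is the equality relation. -/
instance : Monoid MRel where
  one := fun x y => x = y
  mul := fun r s => fun x z => ∃ y, r x y ∧ s y z
  mul_assoc r s t := by
    funext x z
    apply propext
    constructor
    · rintro ⟨y, ⟨w, hw1, hw2⟩, hy⟩
      exact ⟨w, hw1, y, hw2, hy⟩
    · rintro ⟨w, hw1, y, hy1, hy2⟩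
      exact ⟨y, ⟨w, hw1, hy1⟩, hy2⟩
  one_mul r := by
    funext x z
    apply propext
    constructor
    · rintro ⟨y, rfl, h⟩
      exact h
    · intro h
      exact ⟨x, rfl, h⟩
  mul_one r := by
    funext x z
    apply propext
    constructor
    · rintro ⟨y, h, rfl⟩
      exact h
    · intro h
      exact ⟨z, h, rfl⟩

/-- The major triad on root `n`. -/
def maj (n : ZMod 12) : Htriads := Sum.inl n
/-- The minor triad on root `n`. -/
def mino (n : ZMod 12) : Htriads := Sum.inr (Sum.inl n)
/-- The augmented triad `k_aug`, `k ∈ ℤ/4`. -/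
def aug (k : ZMod 4) : Htriads := Sum.inr (Sum.inr k)

/-- Reduction mod 4 of a pitch class mod 12. -/
def m4 (n : ZMod 12) : ZMod 4 := ZMod.castHom (show (4:ℕ) ∣ 12 by norm_num) (ZMod 4) n

/-- The relation `𝒰`: the symmetric relation relating exactly `n_M` with `(n mod 4)_aug`
and `n_m` with `((n+3) mod 4)_aug`. -/
def Urel : MRel := fun x y =>
  (∃ n : ZMod 12, x = maj n ∧ y = aug (m4 n)) ∨
  (∃ n : ZMod 12, x = aug (m4 n) ∧ y = maj n) ∨
  (∃ n : ZMod 12, x = mino n ∧ y = aug (m4 (n + 3))) ∨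
  (∃ n : ZMod 12, x = aug (m4 (n + 3)) ∧ y = mino n)

/-- The relation `𝒫`: the symmetric relation relating exactly `n_M` with `n_m`,
and each augmented triad with itself. -/
def Prel : MRel := fun x y =>
  (∃ n : ZMod 12, x = maj n ∧ y = mino n) ∨
  (∃ n : ZMod 12, x = mino n ∧ y = maj n) ∨
  (∃ k : ZMod 4, x = aug k ∧ y = aug k)

/-- The relation `ℒ`: the symmetric relation relating exactly `n_M` with `(n+4)_m`,
and each augmented triad with itself. -/
def Lrel : MRel := fun x y =>
  (∃ n : ZMod 12, x = maj n ∧ y = mino (n + 4)) ∨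
  (∃ n : ZMod 12, x = mino (n + 4) ∧ y = maj n) ∨
  (∃ k : ZMod 4, x = aug k ∧ y = aug k)

/-- Douthett's parsimonious relation `𝒮 = P_{1,0}` on major, minor and augmented triads. -/
def Srel : MRel := fun x y =>
  (∃ n : ZMod 12, x = maj n ∧ y = mino n) ∨
  (∃ n : ZMod 12, x = mino n ∧ y = maj n) ∨
  (∃ n : ZMod 12, x = maj n ∧ y = mino (n + 4)) ∨
  (∃ n : ZMod 12, x = mino (n + 4) ∧ y = maj n) ∨
  (∃ n : ZMod 12, x = maj n ∧ y = aug (m4 n)) ∨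
  (∃ n : ZMod 12, x = aug (m4 n) ∧ y = maj n) ∨
  (∃ n : ZMod 12, x = mino n ∧ y = aug (m4 (n + 3))) ∨
  (∃ n : ZMod 12, x = aug (m4 (n + 3)) ∧ y = mino n)

/-- Douthett's parsimonious relation `𝒯 = P_{2,0}` on major, minor and augmented triads. -/
def Trel : MRel := fun x y =>
  (∃ n : ZMod 12, x = maj n ∧ y = maj (n + 4)) ∨
  (∃ n : ZMod 12, x = maj n ∧ y = maj (n + 8)) ∨
  (∃ n : ZMod 12, x = maj n ∧ y = mino (n + 1)) ∨
  (∃ n : ZMod 12, x = mino (n + 1) ∧ y = maj n) ∨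
  (∃ n : ZMod 12, x = maj n ∧ y = mino (n + 5)) ∨
  (∃ n : ZMod 12, x = mino (n + 5) ∧ y = maj n) ∨
  (∃ n : ZMod 12, x = maj n ∧ y = aug (m4 (n + 3))) ∨
  (∃ n : ZMod 12, x = aug (m4 (n + 3)) ∧ y = maj n) ∨
  (∃ n : ZMod 12, x = mino n ∧ y = mino (n + 4)) ∨
  (∃ n : ZMod 12, x = mino n ∧ y = mino (n + 8)) ∨
  (∃ n : ZMod 12, x = mino n ∧ y = aug (m4 n)) ∨
  (∃ n : ZMod 12, x = aug (m4 n) ∧ y = mino n)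

/-!
`𝒯` moves two voices by a semitone each, so it preserves the parity of the sum of the pitch
classes. The six triads related to `k_aug` form, together with `k_aug`, a region on which `𝒯²` is
already the full relation; every major or minor triad also has a neighbour in the region of
`(k+2)_aug`, the other region of the same parity, so `𝒯³` is exactly equality of parities, which
`𝒯` absorbs. Since the neighbours of an augmented triad all lie in its own region, `𝒯²` does not
relate `0_aug` and `2_aug`. Hence `𝒯² ≠ 𝒯³ = 𝒯⁴`, and a coincidence `𝒯ⁱ = 𝒯ʲ` with `i < j ≤ 3`,
multiplied by `𝒯²⁻ⁱ`, would give `𝒯² = 𝒯³`.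
-/

open Set Function

section StablePowers

variable {M : Type*} [Monoid M] {x : M} {n : ℕ}

lemma pow_eq_pow_of_pow_succ_eq (h : x ^ (n + 1) = x ^ n) {k : ℕ} (hk : n ≤ k) :
    x ^ k = x ^ n := by
  induction k, hk using Nat.le_induction with
  | base => rfl
  | succ k _ ih => rw [pow_succ, ih, ← pow_succ, h]

lemma injOn_pow_Iic (h : x ^ (n + 2) = x ^ (n + 1)) (hne : x ^ n ≠ x ^ (n + 1)) :
    InjOn (x ^ ·) (Iic (n + 1)) := by
  have pow_ne : ∀ i j, i < j → j ≤ n + 1 → x ^ i ≠ x ^ j := by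
    intro i j hij hj heq
    apply hne
    calc x ^ n = x ^ (n - i) * x ^ i := by rw [← pow_add]; congr; lia
      _ = x ^ (n - i) * x ^ j := by rw [heq]
      _ = x ^ (n - i + j) := (pow_add ..).symm
      _ = x ^ (n + 1) := pow_eq_pow_of_pow_succ_eq h (by lia)
  intro i hi j hj heq
  by_contra hij
  obtain hlt | hlt := Nat.lt_or_gt_of_ne hij
  · exact pow_ne i j hlt hj heq
  · exact pow_ne j i hlt hi heq.symm

lemma coe_closure_singleton_eq_image_pow (h : x ^ (n + 1) = x ^ n) :
    (Submonoid.closure {x} : Set M) = (x ^ ·) '' Iic n := by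
  ext y
  simp only [SetLike.mem_coe, Submonoid.mem_closure_singleton, mem_image, mem_Iic]
  constructor
  · rintro ⟨k, rfl⟩
    obtain hk | hk := le_total k n
    · exact ⟨k, hk, rfl⟩
    · exact ⟨n, le_rfl, (pow_eq_pow_of_pow_succ_eq h hk).symm⟩
  · rintro ⟨k, -, rfl⟩
    exact ⟨k, rfl⟩

lemma natCard_closure_singleton (h : x ^ (n + 2) = x ^ (n + 1)) (hne : x ^ n ≠ x ^ (n + 1)) :
    Nat.card (Submonoid.closure {x}) = n + 2 := by
  calc Nat.card (Submonoid.closure {x})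
      = ((x ^ ·) '' Iic (n + 1)).ncard := by
        rw [← coe_closure_singleton_eq_image_pow h]; rfl
    _ = (Iic (n + 1)).ncard := (injOn_pow_Iic h hne).ncard_image
    _ = n + 2 := by simp [← Nat.card_coe_set_eq]

end StablePowers

lemma comp_onFun_eq {α β : Type*} {r : α → α → Prop} {f : α → β}
    (hf : ∀ x y, r x y → f x = f y) (hr : ∀ x, ∃ y, r x y) :
    Relation.Comp r (Eq on f) = (Eq on f) := by
  ext x z
  constructor
  · rintro ⟨y, hxy, hyz⟩
    exact (hf x y hxy).trans hyz
  · intro hxz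
    obtain ⟨y, hxy⟩ := hr x
    exact ⟨y, hxy, (hf x y hxy).symm.trans hxz⟩

lemma mrel_mul_eq_comp (r s : MRel) : r * s = Relation.Comp r s := rfl

/-- The index `k` of the region of a triad, where the region of `k_aug` consists of `k_aug` and the
six major and minor triads related to it by `𝒯`. -/
def region : Htriads → ZMod 4
  | Sum.inl n => m4 (n + 3)
  | Sum.inr (Sum.inl n) => m4 n
  | Sum.inr (Sum.inr k) => k

/-- The parity of the region of a triad, which is also the parity of the sum of its pitch classes.
-/
def regionParity (x : Htriads) : ZMod 2 :=
  ZMod.castHom (show 2 ∣ 4 by norm_num) (ZMod 2) (region x)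

lemma regionParity_eq_iff {x y : Htriads} :
    regionParity x = regionParity y ↔ region y = region x ∨ region y = region x + 2 := by
  have castHom_eq_iff : ∀ a b : ZMod 4, ZMod.castHom (show 2 ∣ 4 by norm_num) (ZMod 2) a =
      ZMod.castHom (show 2 ∣ 4 by norm_num) (ZMod 2) b ↔ b = a ∨ b = a + 2 := by decide
  exact castHom_eq_iff _ _

lemma trel_symm {x y : Htriads} (h : Trel x y) : Trel y x := by
  have add_four_add_eight (n : ZMod 12) : n + 4 + 8 = n := by revert n; decide
  have add_eight_add_four (n : ZMod 12) : n + 8 + 4 = n := by revert n; decide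
  rcases h with h | h | h | h | h | h | h | h | h | h | h | h <;>
    obtain ⟨n, rfl, rfl⟩ := h <;> grind [Trel]

lemma trel_aug_iff {k : ZMod 4} {x : Htriads} :
    Trel (aug k) x ↔ region x = k ∧ x ∉ range aug := by
  rcases x with n | n | k <;> simp [Trel, maj, mino, aug, region, eq_comm]

lemma region_eq_or_of_trel {x y : Htriads} (h : Trel x y) :
    region y = region x ∨ region y = region x + 2 := by
  rcases h with h | h | h | h | h | h | h | h | h | h | h | h <;>
    obtain ⟨n, rfl, rfl⟩ := h <;> revert n <;> decide

lemma exists_trel_region_eq (x : Htriads) :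
    ∃ y ∉ range aug, Trel x y ∧ region y = region x := by
  rcases x with n | n | k
  · exact ⟨maj (n + 4), by simp [aug, maj], Or.inl ⟨n, rfl, rfl⟩, by revert n; decide⟩
  · exact ⟨mino (n + 4), by simp [aug, mino], by simp [Trel, mino, maj, aug], by revert n; decide⟩
  · obtain ⟨n, rfl⟩ : ∃ n, m4 n = k := by revert k; decide
    exact ⟨mino n, by simp [aug, mino], trel_aug_iff.2 ⟨rfl, by simp [aug, mino]⟩, rfl⟩

lemma exists_trel_region_eq_add_two {x : Htriads} (hx : x ∉ range aug) :
    ∃ y ∉ range aug, Trel x y ∧ region y = region x + 2 := by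
  rcases x with n | n | k
  · exact ⟨mino (n + 1), by simp [aug, mino], by simp [Trel, mino, maj, aug], by revert n; decide⟩
  · exact ⟨maj (n - 1), by simp [aug, maj], by simp [Trel, mino, maj, aug], by revert n; decide⟩
  · exact absurd ⟨k, rfl⟩ hx

lemma trel_sq_of_region_eq {x y : Htriads} (h : region x = region y) : (Trel ^ 2) x y := by
  rw [pow_two, mrel_mul_eq_comp]
  by_cases hx : x ∈ range aug
  · obtain ⟨k, rfl⟩ := hx
    obtain ⟨z, hz, hyz, hzy⟩ := exists_trel_region_eq y
    exact ⟨z, trel_aug_iff.2 ⟨hzy.trans h.symm, hz⟩, trel_symm hyz⟩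
  by_cases hy : y ∈ range aug
  · obtain ⟨k, rfl⟩ := hy
    obtain ⟨z, hz, hxz, hzx⟩ := exists_trel_region_eq x
    exact ⟨z, hxz, trel_symm (trel_aug_iff.2 ⟨hzx.trans h, hz⟩)⟩
  · exact ⟨aug (region x), trel_symm (trel_aug_iff.2 ⟨rfl, hx⟩), trel_aug_iff.2 ⟨h.symm, hy⟩⟩

lemma trel_pow_three_of_region_eq {x y : Htriads} (h : region x = region y) :
    (Trel ^ 3) x y := by
  obtain ⟨z, -, hxz, hz⟩ := exists_trel_region_eq x
  rw [pow_succ', mrel_mul_eq_comp]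
  exact ⟨z, hxz, trel_sq_of_region_eq (hz.trans h)⟩

lemma trel_pow_three_of_region_eq_add_two {x y : Htriads} (h : region y = region x + 2) :
    (Trel ^ 3) x y := by
  have add_two_add_two (a : ZMod 4) : a + 2 + 2 = a := by revert a; decide
  by_cases hx : x ∈ range aug
  · by_cases hy : y ∈ range aug
    · obtain ⟨k, rfl⟩ := hy
      obtain ⟨z, hz, hxz, hzx⟩ := exists_trel_region_eq x
      obtain ⟨w, hw, hzw, hwz⟩ := exists_trel_region_eq_add_two hz
      have hwk : region w = k := by rw [hwz, hzx, ← h]; rfl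
      rw [pow_succ', pow_two, mrel_mul_eq_comp, mrel_mul_eq_comp]
      exact ⟨z, hxz, w, hzw, trel_symm (trel_aug_iff.2 ⟨hwk, hw⟩)⟩
    · obtain ⟨z, -, hyz, hz⟩ := exists_trel_region_eq_add_two hy
      have hxz : region x = region z := by rw [hz, h, add_two_add_two]
      rw [pow_succ, mrel_mul_eq_comp]
      exact ⟨z, trel_sq_of_region_eq hxz, trel_symm hyz⟩
  · obtain ⟨z, -, hxz, hz⟩ := exists_trel_region_eq_add_two hx
    rw [pow_succ', mrel_mul_eq_comp]
    exact ⟨z, hxz, trel_sq_of_region_eq (hz.trans h.symm)⟩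

lemma regionParity_eq_of_trel {x y : Htriads} (h : Trel x y) :
    regionParity x = regionParity y :=
  regionParity_eq_iff.2 (region_eq_or_of_trel h)

lemma trel_pow_three : Trel ^ 3 = (Eq on regionParity) := by
  ext x y
  constructor
  · rw [pow_succ', pow_two, mrel_mul_eq_comp, mrel_mul_eq_comp]
    rintro ⟨z, hxz, w, hzw, hwy⟩
    exact (regionParity_eq_of_trel hxz).trans <|
      (regionParity_eq_of_trel hzw).trans (regionParity_eq_of_trel hwy)
  · intro h
    obtain hxy | hxy := regionParity_eq_iff.1 h
    · exact trel_pow_three_of_region_eq hxy.symm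
    · exact trel_pow_three_of_region_eq_add_two hxy

lemma trel_pow_four : Trel ^ 4 = Trel ^ 3 := by
  have exists_trel (x : Htriads) : ∃ y, Trel x y :=
    (exists_trel_region_eq x).imp fun _ h => h.2.1
  rw [pow_succ', trel_pow_three, mrel_mul_eq_comp]
  exact comp_onFun_eq (fun _ _ => regionParity_eq_of_trel) exists_trel

lemma not_trel_sq_aug_aug {k l : ZMod 4} (hkl : k ≠ l) : ¬ (Trel ^ 2) (aug k) (aug l) := by
  rw [pow_two, mrel_mul_eq_comp]
  rintro ⟨z, hkz, hzl⟩
  exact hkl ((trel_aug_iff.1 hkz).1.symm.trans (trel_aug_iff.1 (trel_symm hzl)).1)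

lemma trel_sq_ne_trel_pow_three : Trel ^ 2 ≠ Trel ^ 3 := by
  intro h
  have h02 : (Trel ^ 3) (aug 0) (aug 2) := trel_pow_three_of_region_eq_add_two rfl
  rw [← h] at h02
  exact not_trel_sq_aug_aug (by decide) h02

/-- the submonoid generated by `T` has exactly 4 elements; equivalently,
`1, T, T², T³` are pairwise distinct and `T⁴ = T³`. -/
theorem stmt14 :
    Nat.card (Submonoid.closure ({Trel} : Set MRel)) = 4 ∧
    ([1, Trel, Trel ^ 2, Trel ^ 3] : List MRel).Pairwise (· ≠ ·) ∧
    Trel ^ 4 = Trel ^ 3 := by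
  have powers_nodup : ((List.range 4).map (Trel ^ ·)).Nodup :=
    List.nodup_range.map_on fun i hi j hj =>
      injOn_pow_Iic trel_pow_four trel_sq_ne_trel_pow_three
        (Nat.lt_succ_iff.1 (List.mem_range.1 hi)) (Nat.lt_succ_iff.1 (List.mem_range.1 hj))
  have map_range_eq : (List.range 4).map (Trel ^ ·) = [1, Trel, Trel ^ 2, Trel ^ 3] := by
    simp [List.range_succ]
  exact ⟨natCard_closure_singleton trel_pow_four trel_sq_ne_trel_pow_three,
    map_range_eq ▸ powers_nodup, trel_pow_four⟩
end

section
/- Let S and T be Douthett's parsimonious relations P_{1,0} and P_{2,0} on the 28-element set H of major, minor, and augmented triads. In the monoid of binary relations on H under relational composition, the following identities hold: T·S = S·T, S³ = S·T, T·S² = T², and S·T³ = S·T² (products written as words in the monoid). -/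
/-!
The sum modulo 12 of the pitch classes of a triad grades `Htriads` by `ℤ/12`: a level divisible by
three consists of one augmented triad, and every other level consists of three major or three minor
triads. `S` changes the pitch sum by `±1` and `T` changes it by `0` or `±2`. Each relates a triad to
a strict majority (all, or two out of three) of every level it reaches, the only exception being
that `T` does not relate an augmented triad to itself. Two strict majorities of the same level
intersect, so a product of two of these relations relates all pairs of triads whose pitch sums
differ by an admissible amount. The four identities then become identities between sumsets in
`ℤ/12`.
-/

open Finset Relation
open scoped Pointwise

section Majority

variable {α G : Type*} [Fintype α] [DecidableEq G] (σ : α → G) (R : α → α → Prop) [DecidableRel R]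

/-- `R` relates `x` to strictly more than half of the elements of degree `g`. -/
def RelatesMajority (x : α) (g : G) : Prop :=
  #{y | σ y = g} < 2 * #{y | σ y = g ∧ R x y}

instance (x : α) (g : G) : Decidable (RelatesMajority σ R x g) :=
  inferInstanceAs (Decidable (_ < _))

variable {σ R} {Q : α → α → Prop} [DecidableRel Q]

theorem RelatesMajority.exists_rel {x : α} {g : G} (h : RelatesMajority σ R x g) :
    ∃ y, σ y = g ∧ R x y := by
  have hpos : 0 < #{y | σ y = g ∧ R x y} := by
    unfold RelatesMajority at h
    omega
  obtain ⟨y, hy⟩ := card_pos.1 hpos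
  exact ⟨y, (mem_filter_univ y).1 hy⟩

theorem RelatesMajority.comp {x z : α} {g : G} [Std.Symm Q]
    (hx : RelatesMajority σ R x g) (hz : RelatesMajority σ Q z g) : Comp R Q x z := by
  classical
  have hcard : #{y | σ y = g} < #{y | σ y = g ∧ R x y} + #{y | σ y = g ∧ Q z y} := by
    unfold RelatesMajority at hx hz
    omega
  obtain ⟨y, hy⟩ := inter_nonempty_of_card_lt_card_add_card
    (monotone_filter_right univ fun _ _ h => h.1)
    (monotone_filter_right univ fun _ _ h => h.1) hcard
  simp only [mem_inter, mem_filter_univ] at hy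
  exact ⟨y, hy.1.2, symm hy.2.2⟩

end Majority

section Grading

variable {α G : Type*} [AddCommGroup G] [DecidableEq G] (σ : α → G)

/-- For a grading `σ` of a type by an abelian group, the relation holding between all pairs of
elements whose degrees differ by an element of `D`, which is the largest relation that changes
degrees only by elements of `D`. -/
def shiftRel (D : Finset G) : α → α → Prop := fun x y => σ y - σ x ∈ D

variable {σ} {R Q : α → α → Prop} {D E F : Finset G}

theorem symm_shiftRel (hD : -D = D) : Std.Symm (shiftRel σ D) where
  symm x y h := by rwa [shiftRel, ← neg_sub, ← mem_neg', hD]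

theorem comp_le_shiftRel (hR : R ≤ shiftRel σ D) (hQ : Q ≤ shiftRel σ E) (hF : D + E ⊆ F) :
    Comp R Q ≤ shiftRel σ F := by
  rintro x z ⟨y, hxy, hyz⟩
  exact hF (mem_add.2 ⟨_, hR x y hxy, _, hQ y z hyz, by abel⟩)

variable [Fintype α] [DecidableRel R] [DecidableRel Q]

variable (σ R) in
/-- From every element, and for every `d ∈ D`, the relation `R` reaches a strict majority of the
elements whose degree is larger by `d`; a lower counterpart of `R ≤ shiftRel σ D`. -/
def RelatesMajorities (D : Finset G) : Prop :=
  ∀ x, ∀ d ∈ D, RelatesMajority σ R x (σ x + d)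

theorem RelatesMajorities.relatesMajority {x y : α} (hR : RelatesMajorities σ R D)
    (h : shiftRel σ D x y) : RelatesMajority σ R x (σ y) :=
  add_sub_cancel (σ x) (σ y) ▸ hR x _ h

-- `E` is subtracted because the step through `Q` is taken backwards, from the endpoint `z`.
theorem shiftRel_le_comp [Std.Symm Q] (hR : RelatesMajorities σ R D)
    (hQ : RelatesMajorities σ Q E) (hF : F ⊆ D - E) : shiftRel σ F ≤ Comp R Q := by
  intro x z hxz
  obtain ⟨d, hd, e, he, hde⟩ := mem_sub.1 (hF hxz)
  have hmid : σ z + e = σ x + d := by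
    rw [sub_eq_sub_iff_add_eq_add.1 hde.symm, add_comm]
  exact (hR x d hd).comp (hmid ▸ hQ z e he)

theorem shiftRel_le_comp_shiftRel (hR : RelatesMajorities σ R D) (hF : F ⊆ D + E) :
    shiftRel σ F ≤ Comp R (shiftRel σ E) := by
  intro x z hxz
  obtain ⟨d, hd, e, he, hde⟩ := mem_add.1 (hF hxz)
  obtain ⟨y, hy, hxy⟩ := (hR x d hd).exists_rel
  have hyz : σ z - σ y = e := by
    rw [hy, ← sub_sub, ← hde, add_sub_cancel_left]
  exact ⟨y, hxy, by rwa [shiftRel, hyz]⟩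

end Grading

/-- The sum modulo 12 of the pitch classes of a triad. The pitch classes of `k_aug` are those
congruent to `k` modulo 4, so the representative of `k` does not matter. -/
def pitchSum : Htriads → ZMod 12
  | Sum.inl n => n + (n + 4) + (n + 7)
  | Sum.inr (Sum.inl n) => n + (n + 3) + (n + 7)
  | Sum.inr (Sum.inr k) => k.val + (k.val + 4) + (k.val + 8)

-- A shortcut: without it, instance search on the long disjunctions in `Srel` and `Trel` gives up.
instance (p q : ZMod 12 → Htriads) (x y : Htriads) : Decidable (∃ n, x = p n ∧ y = q n) :=
  inferInstance

instance : DecidableRel Srel := fun x y => by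
  unfold Srel
  infer_instance

instance : DecidableRel Trel := fun x y => by
  unfold Trel
  infer_instance

instance : Std.Symm Srel where
  symm x y h := by
    rcases h with h | h | h | h | h | h | h | h <;> obtain ⟨n, rfl, rfl⟩ := h <;> revert n <;>
      decide +kernel

instance : Std.Symm Trel where
  symm x y h := by
    rcases h with h | h | h | h | h | h | h | h | h | h | h | h <;> obtain ⟨n, rfl, rfl⟩ := h <;>
      revert n <;> decide +kernel

theorem srel_le_shiftRel : Srel ≤ shiftRel pitchSum {1, -1} := by
  intro x y h
  unfold shiftRel
  rcases h with h | h | h | h | h | h | h | h <;> obtain ⟨n, rfl, rfl⟩ := h <;> revert n <;> decide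

theorem trel_le_shiftRel : Trel ≤ shiftRel pitchSum {0, 2, -2} := by
  intro x y h
  unfold shiftRel
  rcases h with h | h | h | h | h | h | h | h | h | h | h | h <;> obtain ⟨n, rfl, rfl⟩ := h <;>
    revert n <;> decide

theorem relatesMajorities_srel : RelatesMajorities pitchSum Srel {1, -1} := by
  unfold RelatesMajorities
  decide +kernel

theorem relatesMajorities_trel : RelatesMajorities pitchSum Trel {2, -2} := by
  unfold RelatesMajorities
  decide +kernel

theorem relatesMajority_trel_pitchSum :
    ∀ x : Htriads, (∀ k, x ≠ aug k) → RelatesMajority pitchSum Trel x (pitchSum x) := by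
  decide +kernel

theorem pitchSum_aug_sub_pitchSum_aug_notMem :
    ∀ j k : ZMod 4, pitchSum (aug k) - pitchSum (aug j) ∉ ({2, -2} : Finset (ZMod 12)) := by
  decide

-- Here and below, the product `r * s` in `MRel` unfolds to `Comp r s`.
theorem srel_mul_shiftRel {E F : Finset (ZMod 12)} (h : {1, -1} + E = F) :
    Srel * shiftRel pitchSum E = shiftRel pitchSum F :=
  le_antisymm (comp_le_shiftRel srel_le_shiftRel le_rfl h.subset)
    (shiftRel_le_comp_shiftRel relatesMajorities_srel h.superset)

theorem trel_mul_shiftRel {E F : Finset (ZMod 12)} (hF : F ⊆ {2, -2} + E)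
    (hE : {0, 2, -2} + E ⊆ F) : Trel * shiftRel pitchSum E = shiftRel pitchSum F :=
  le_antisymm (comp_le_shiftRel trel_le_shiftRel le_rfl hE)
    (shiftRel_le_comp_shiftRel relatesMajorities_trel hF)

theorem srel_sq : Srel ^ 2 = shiftRel pitchSum {0, 2, -2} :=
  (pow_two Srel).trans <| le_antisymm
    (comp_le_shiftRel srel_le_shiftRel srel_le_shiftRel (by decide))
    (shiftRel_le_comp relatesMajorities_srel relatesMajorities_srel (by decide))

theorem srel_mul_trel : Srel * Trel = shiftRel pitchSum {1, -1, 3, -3} :=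
  le_antisymm (comp_le_shiftRel srel_le_shiftRel trel_le_shiftRel (by decide))
    (shiftRel_le_comp relatesMajorities_srel relatesMajorities_trel (by decide))

theorem trel_mul_srel : Trel * Srel = shiftRel pitchSum {1, -1, 3, -3} :=
  le_antisymm (comp_le_shiftRel trel_le_shiftRel srel_le_shiftRel (by decide))
    (shiftRel_le_comp relatesMajorities_trel relatesMajorities_srel (by decide))

-- Pass through the level of `x` or that of `z`, whichever does not consist of an augmented triad.
theorem shiftRel_two_le_trel_comp_trel : shiftRel pitchSum {2, -2} ≤ Comp Trel Trel := by
  intro x z hxz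
  by_cases hx : ∀ k, x ≠ aug k
  · have hzx : shiftRel pitchSum {2, -2} z x := (symm_shiftRel (by decide)).symm x z hxz
    exact (relatesMajority_trel_pitchSum x hx).comp (relatesMajorities_trel.relatesMajority hzx)
  · obtain ⟨j, rfl⟩ := not_forall_not.1 hx
    have hz : ∀ k, z ≠ aug k := by
      rintro k rfl
      exact pitchSum_aug_sub_pitchSum_aug_notMem j k hxz
    exact (relatesMajorities_trel.relatesMajority hxz).comp (relatesMajority_trel_pitchSum z hz)

theorem trel_sq : Trel ^ 2 = shiftRel pitchSum {0, 2, -2, 4, -4} := by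
  rw [pow_two]
  refine le_antisymm (comp_le_shiftRel trel_le_shiftRel trel_le_shiftRel (by decide)) ?_
  intro x z hxz
  have hcases : ({0, 2, -2, 4, -4} : Finset (ZMod 12)) = {2, -2} ∪ {0, 4, -4} := by decide
  rw [hcases] at hxz
  rcases mem_union.1 hxz with h | h
  · exact shiftRel_two_le_trel_comp_trel x z h
  · exact shiftRel_le_comp relatesMajorities_trel relatesMajorities_trel (by decide) x z h

/-- `T·S = S·T`, `S³ = S·T`, `T·S² = T²`, and `S·T³ = S·T²`. -/
theorem stmt15 :
    Trel * Srel = Srel * Trel ∧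
    Srel ^ 3 = Srel * Trel ∧
    Trel * Srel ^ 2 = Trel ^ 2 ∧
    Srel * Trel ^ 3 = Srel * Trel ^ 2 := by
  refine ⟨?_, ?_, ?_, ?_⟩
  · rw [trel_mul_srel, srel_mul_trel]
  · rw [pow_succ', srel_sq, srel_mul_trel]
    exact srel_mul_shiftRel (by decide)
  · rw [srel_sq, trel_sq]
    exact trel_mul_shiftRel (by decide) (by decide)
  · have hcube : Trel ^ 3 = shiftRel pitchSum {0, 2, -2, 4, -4, 6} := by
      rw [pow_succ', trel_sq]
      exact trel_mul_shiftRel (by decide) (by decide)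
    rw [hcube, trel_sq]
    exact (srel_mul_shiftRel rfl).trans (srel_mul_shiftRel (by decide)).symm
end

section
/- Let S be Douthett's parsimonious relation P_{1,0} on the 28-element set H of major, minor, and augmented triads, and let M_S = {1, S, S², S³, S⁴, S⁵, S⁶} be the submonoid it generates. An element R of M_S relates the A major triad 9_M to the F♯ major triad 6_M (i.e. 9_M R 6_M) if and only if R = S³ or R = S⁵. -/
/-!
Arrange the triads around a circle of twelve levels, `k_aug` at `3k`, the minor triads `n_m` with
`n ≡ k + 1` mod `4` at `3k + 1`, and the major triads `n_M` with `n ≡ k + 1` at `3k + 2`. Each step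
of `𝒮` moves one level up or down, every triad has a neighbour on each side, and an augmented triad
is adjacent to everything on the two levels next to it. Since one of any three consecutive levels
is augmented, any two triads on equal levels or two levels apart are joined by a path of length two.
Inductively, for `n ≥ 2`, triads are related by `𝒮ⁿ` exactly when some `n`-step walk on the 12-cycle
joins their levels. From `n = 5` on, such walks reach every level of the correct parity, so the odd
powers stabilise at `𝒮⁵`. The levels of `9_M` and `6_M` are three apart, so exactly the odd powers
from `𝒮³` on relate them.
-/

section UnitWalk

variable {A : Type*} [CommRing A] {n : ℕ} {a b : A}

/-- There is a walk of `n` steps, each adding `1` or `-1`, from `a` to `b`. It is encoded by the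
number `j` of its downward steps, the order of the steps being immaterial. -/
def UnitWalk (n : ℕ) (a b : A) : Prop := ∃ j ≤ n, a + n = b + 2 * j

lemma unitWalk_zero : UnitWalk 0 a b ↔ a = b := by
  simp [UnitWalk]

lemma unitWalk_succ : UnitWalk (n + 1) a b ↔ UnitWalk n a (b - 1) ∨ UnitWalk n a (b + 1) := by
  constructor
  · rintro ⟨j, hj, h⟩
    push_cast at h
    rcases hj.lt_or_eq with hlt | rfl
    · exact .inl ⟨j, Nat.le_of_lt_succ hlt, by linear_combination h⟩
    · exact .inr ⟨n, le_rfl, by push_cast at h; linear_combination h⟩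
  · rintro (⟨j, hj, h⟩ | ⟨j, hj, h⟩)
    · exact ⟨j, by lia, by push_cast; linear_combination h⟩
    · exact ⟨j + 1, by lia, by push_cast; linear_combination h⟩

lemma UnitWalk.even (h : UnitWalk n a b) : Even (a + n - b) := by
  obtain ⟨j, -, hj⟩ := h
  exact ⟨j, by linear_combination hj⟩

lemma unitWalk_iff_even {N k : ℕ} (hk : 0 < k) (hN : N ∣ 2 * k) (hn : k ≤ n + 1) {a b : ZMod N} :
    UnitWalk n a b ↔ Even (a + n - b) := by
  refine ⟨UnitWalk.even, ?_⟩
  rintro ⟨r, hr⟩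
  have : NeZero N := ⟨ne_zero_of_dvd_ne_zero (by positivity) hN⟩
  obtain ⟨i, rfl⟩ := ZMod.natCast_zmod_surjective r
  have period : (2 * k : ZMod N) = 0 := by
    exact_mod_cast (ZMod.natCast_eq_zero_iff (2 * k) N).2 hN
  have division : (i : ZMod N) = (i % k : ℕ) + k * (i / k : ℕ) := by
    exact_mod_cast congrArg (Nat.cast (R := ZMod N)) (Nat.mod_add_div i k).symm
  refine ⟨i % k, by have := Nat.mod_lt i hk; lia, ?_⟩
  linear_combination hr + 2 * division + (i / k : ℕ) * period

end UnitWalk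

namespace MRel

variable {A : Type*} [CommRing A] {R : MRel} {f : Htriads → A} {m n : ℕ}

lemma pow_succ_apply {x z : Htriads} : (R ^ (n + 1)) x z ↔ ∃ y, (R ^ n) x y ∧ R y z := by
  rw [pow_succ]
  rfl

lemma unitWalk_of_pow (hstep : ∀ x y, R x y → f y = f x + 1 ∨ f y = f x - 1) {x z : Htriads}
    (h : (R ^ n) x z) : UnitWalk n (f x) (f z) := by
  induction n generalizing z with
  | zero => exact unitWalk_zero.2 (congrArg f h)
  | succ n ih =>
    obtain ⟨y, hxy, hyz⟩ := pow_succ_apply.1 h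
    have walk : UnitWalk n (f x) (f y) := ih hxy
    rw [unitWalk_succ]
    rcases hstep y z hyz with h | h
    · exact .inl (by rwa [h, add_sub_cancel_right])
    · exact .inr (by rwa [h, sub_add_cancel])

lemma pow_of_unitWalk (hup : ∀ z, ∃ y, R y z ∧ f y = f z + 1)
    (hdown : ∀ z, ∃ y, R y z ∧ f y = f z - 1)
    (hm : ∀ x z, UnitWalk m (f x) (f z) → (R ^ m) x z) (hmn : m ≤ n) {x z : Htriads}
    (h : UnitWalk n (f x) (f z)) : (R ^ n) x z := by
  induction n, hmn using Nat.le_induction generalizing z with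
  | base => exact hm x z h
  | succ n _ ih =>
    rw [pow_succ_apply]
    rcases unitWalk_succ.1 h with h | h
    · obtain ⟨y, hyz, hy⟩ := hdown z
      exact ⟨y, ih (hy ▸ h), hyz⟩
    · obtain ⟨y, hyz, hy⟩ := hup z
      exact ⟨y, ih (hy ▸ h), hyz⟩

end MRel

/-- The position of a triad on the circle of twelve levels around which `Srel` moves by single
steps. The cast takes the representative of `k` in `{0, 1, 2, 3}`. -/
def level : Htriads → ZMod 12
  | .inl n => 3 * n - 1
  | .inr (.inl n) => 3 * n - 2
  | .inr (.inr k) => 3 * k.cast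

lemma level_maj (n : ZMod 12) : level (maj n) = 3 * n - 1 := rfl

lemma level_mino (n : ZMod 12) : level (mino n) = 3 * n - 2 := rfl

lemma level_aug_m4 : ∀ n : ZMod 12, level (aug (m4 n)) = 3 * n := by
  decide

lemma m4_surjective : Function.Surjective m4 := ZMod.castHom_surjective _

lemma twelve_eq_zero : (12 : ZMod 12) = 0 := rfl

lemma srel_maj_mino (n : ZMod 12) : Srel (maj n) (mino n) := .inl ⟨n, rfl, rfl⟩

lemma srel_maj_aug (n : ZMod 12) : Srel (maj n) (aug (m4 n)) := by
  iterate 4 right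
  exact .inl ⟨n, rfl, rfl⟩

lemma srel_mino_aug (n : ZMod 12) : Srel (mino n) (aug (m4 (n + 3))) := by
  iterate 6 right
  exact .inl ⟨n, rfl, rfl⟩

lemma Srel.symm {x y : Htriads} (h : Srel x y) : Srel y x := by
  unfold Srel at h ⊢
  grind

lemma Srel.level_eq {x y : Htriads} (h : Srel x y) :
    level y = level x + 1 ∨ level y = level x - 1 := by
  rcases h with ⟨n, rfl, rfl⟩ | ⟨n, rfl, rfl⟩ | ⟨n, rfl, rfl⟩ | ⟨n, rfl, rfl⟩ | ⟨n, rfl, rfl⟩ |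
    ⟨n, rfl, rfl⟩ | ⟨n, rfl, rfl⟩ | ⟨n, rfl, rfl⟩ <;>
  simp only [level_maj, level_mino, level_aug_m4, or_true]
  · right; ring
  · left; ring
  · right; linear_combination twelve_eq_zero
  · left; linear_combination -twelve_eq_zero
  · left; ring
  · right; linear_combination twelve_eq_zero
  · left; linear_combination -twelve_eq_zero

lemma eq_maj_or_eq_mino_or_eq_aug (x : Htriads) :
    (∃ n, x = maj n) ∨ (∃ n, x = mino n) ∨ ∃ n, x = aug (m4 n) := by
  rcases x with n | n | k
  · exact .inl ⟨n, rfl⟩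
  · exact .inr (.inl ⟨n, rfl⟩)
  · obtain ⟨n, rfl⟩ := m4_surjective k
    exact .inr (.inr ⟨n, rfl⟩)

lemma exists_srel_level_add_one (x : Htriads) : ∃ y, Srel x y ∧ level y = level x + 1 := by
  rcases eq_maj_or_eq_mino_or_eq_aug x with ⟨n, rfl⟩ | ⟨n, rfl⟩ | ⟨n, rfl⟩
  · refine ⟨aug (m4 n), srel_maj_aug n, ?_⟩
    rw [level_aug_m4, level_maj]
    ring
  · refine ⟨maj n, (srel_maj_mino n).symm, ?_⟩
    rw [level_maj, level_mino]
    ring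
  · refine ⟨mino (n - 3), by simpa using (srel_mino_aug (n - 3)).symm, ?_⟩
    rw [level_mino, level_aug_m4]
    linear_combination -twelve_eq_zero

lemma exists_srel_level_sub_one (x : Htriads) : ∃ y, Srel x y ∧ level y = level x - 1 := by
  rcases eq_maj_or_eq_mino_or_eq_aug x with ⟨n, rfl⟩ | ⟨n, rfl⟩ | ⟨n, rfl⟩
  · refine ⟨mino n, srel_maj_mino n, ?_⟩
    rw [level_mino, level_maj]
    ring
  · refine ⟨aug (m4 (n + 3)), srel_mino_aug n, ?_⟩
    rw [level_aug_m4, level_mino]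
    linear_combination twelve_eq_zero
  · refine ⟨maj n, (srel_maj_aug n).symm, ?_⟩
    rw [level_maj, level_aug_m4]

lemma exists_level_aug_eq : ∀ c : ZMod 12,
    ∃ k, level (aug k) = c ∨ level (aug k) = c + 1 ∨ level (aug k) = c - 1 := by
  decide

lemma eq_aug_of_level_eq {x : Htriads} {k : ZMod 4} : level x = level (aug k) → x = aug k := by
  revert x k
  decide

lemma srel_aug_of_level {x : Htriads} {k : ZMod 4}
    (h : level x = level (aug k) + 1 ∨ level x = level (aug k) - 1) : Srel x (aug k) := by
  rcases x with n | n | l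
  · have root : m4 n = k := by revert h; revert n k; decide
    exact root ▸ srel_maj_aug n
  · have root : m4 (n + 3) = k := by revert h; revert n k; decide
    exact root ▸ srel_mino_aug n
  · have not_adjacent : ∀ l k : ZMod 4,
        ¬(level (aug l) = level (aug k) + 1 ∨ level (aug l) = level (aug k) - 1) := by decide
    exact absurd h (not_adjacent l k)

lemma exists_srel_srel_of_level_eq {x z : Htriads} (h : level z = level x) :
    ∃ y, Srel x y ∧ Srel y z := by
  obtain ⟨k, hk | hk | hk⟩ := exists_level_aug_eq (level x)
  · obtain rfl : x = aug k := eq_aug_of_level_eq hk.symm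
    obtain rfl : z = aug k := eq_aug_of_level_eq h
    obtain ⟨y, hy, -⟩ := exists_srel_level_add_one (aug k)
    exact ⟨y, hy, hy.symm⟩
  · exact ⟨aug k, srel_aug_of_level (.inr (by rw [hk]; ring)),
      (srel_aug_of_level (.inr (by rw [hk, h]; ring))).symm⟩
  · exact ⟨aug k, srel_aug_of_level (.inl (by rw [hk]; ring)),
      (srel_aug_of_level (.inl (by rw [hk, h]; ring))).symm⟩

lemma exists_srel_srel_of_level_eq_add_two {x z : Htriads} (h : level z = level x + 2) :
    ∃ y, Srel x y ∧ Srel y z := by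
  obtain ⟨k, hk | hk | hk⟩ := exists_level_aug_eq (level x + 1)
  · exact ⟨aug k, srel_aug_of_level (.inr (by rw [hk]; ring)),
      (srel_aug_of_level (.inl (by rw [hk, h]; ring))).symm⟩
  · obtain rfl : z = aug k := eq_aug_of_level_eq (by rw [hk, h]; ring)
    obtain ⟨y, hxy, hy⟩ := exists_srel_level_add_one x
    exact ⟨y, hxy, srel_aug_of_level (.inr (by rw [hk, hy]; ring))⟩
  · obtain rfl : x = aug k := eq_aug_of_level_eq (by rw [hk]; ring)
    obtain ⟨y, hzy, hy⟩ := exists_srel_level_sub_one z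
    exact ⟨y, (srel_aug_of_level (.inl (by rw [hy, h]; ring))).symm, hzy.symm⟩

lemma srel_sq_of_unitWalk {x z : Htriads} (h : UnitWalk 2 (level x) (level z)) :
    (Srel ^ 2) x z := by
  rw [sq]
  obtain ⟨j, hj, h⟩ := h
  interval_cases j
  · exact exists_srel_srel_of_level_eq_add_two (by push_cast at h; linear_combination -h)
  · exact exists_srel_srel_of_level_eq (by push_cast at h; linear_combination -h)
  · obtain ⟨y, hzy, hyx⟩ : ∃ y, Srel z y ∧ Srel y x :=
      exists_srel_srel_of_level_eq_add_two (by push_cast at h; linear_combination h)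
    exact ⟨y, hyx.symm, hzy.symm⟩

lemma unitWalk_of_srel_pow {n : ℕ} {x z : Htriads} (h : (Srel ^ n) x z) :
    UnitWalk n (level x) (level z) :=
  MRel.unitWalk_of_pow (fun _ _ hxy => hxy.level_eq) h

theorem srel_pow_iff_unitWalk {n : ℕ} (hn : 2 ≤ n) {x z : Htriads} :
    (Srel ^ n) x z ↔ UnitWalk n (level x) (level z) := by
  refine ⟨unitWalk_of_srel_pow,
    MRel.pow_of_unitWalk (fun z => ?_) (fun z => ?_) (fun _ _ => srel_sq_of_unitWalk) hn⟩
  · exact (exists_srel_level_add_one z).imp fun _ ⟨h, hy⟩ => ⟨h.symm, hy⟩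
  · exact (exists_srel_level_sub_one z).imp fun _ ⟨h, hy⟩ => ⟨h.symm, hy⟩

theorem srel_pow_iff_even {n : ℕ} (hn : 5 ≤ n) {x z : Htriads} :
    (Srel ^ n) x z ↔ Even (level x + n - level z) := by
  rw [srel_pow_iff_unitWalk (by lia),
    unitWalk_iff_even (k := 6) (by norm_num) (by norm_num) (by lia)]

theorem srel_pow_eq_srel_pow {m n : ℕ} (hm : 5 ≤ m) (hmn : m ≤ n) (h : Even (n - m)) :
    Srel ^ n = Srel ^ m := by
  obtain ⟨r, hr⟩ := h
  obtain rfl : n = m + (r + r) := by lia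
  funext x z
  rw [srel_pow_iff_even (by lia), srel_pow_iff_even hm, eq_iff_iff]
  have shift : level x + (m + (r + r) : ℕ) - level z = level x + m - level z + (r + r) := by
    push_cast
    ring
  rw [shift]
  exact ⟨fun h => by simpa using h.sub (.add_self (r : ZMod 12)), fun h => h.add (.add_self _)⟩

lemma unitWalk_maj_nine_maj_six_iff {n : ℕ} :
    UnitWalk n (level (maj 9)) (level (maj 6)) ↔ 3 ≤ n ∧ Odd n := by
  change UnitWalk n (2 : ZMod 12) 5 ↔ _
  constructor
  · rintro ⟨j, hj, h⟩
    have residues : 2 + n ≡ 5 + 2 * j [MOD 12] := by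
      rw [← ZMod.natCast_eq_natCast_iff]
      exact_mod_cast h
    rw [Nat.ModEq] at residues
    exact ⟨by lia, by rw [Nat.odd_iff]; lia⟩
  · rintro ⟨hn, m, rfl⟩
    obtain ⟨j, rfl⟩ : ∃ j, m = j + 1 := ⟨m - 1, by lia⟩
    exact ⟨j, by lia, by push_cast; ring⟩

theorem srel_pow_maj_nine_maj_six_iff {n : ℕ} :
    (Srel ^ n) (maj 9) (maj 6) ↔ 3 ≤ n ∧ Odd n := by
  rw [← unitWalk_maj_nine_maj_six_iff]
  refine ⟨unitWalk_of_srel_pow, fun h => ?_⟩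
  have hn : 3 ≤ n := (unitWalk_maj_nine_maj_six_iff.1 h).1
  exact (srel_pow_iff_unitWalk (by lia)).2 h

/-- an element `R` of the submonoid generated by `S` relates the A major
triad `9_M` to the F♯ major triad `6_M` iff `R = S³` or `R = S⁵`. -/
theorem stmt17 (R : MRel) (hR : R ∈ Submonoid.closure ({Srel} : Set MRel)) :
    R (maj 9) (maj 6) ↔ (R = Srel ^ 3 ∨ R = Srel ^ 5) := by
  obtain ⟨n, rfl⟩ := Submonoid.mem_closure_singleton.1 hR
  constructor
  · intro h
    obtain ⟨hn, m, rfl⟩ := srel_pow_maj_nine_maj_six_iff.1 h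
    obtain rfl | hm : m = 1 ∨ 2 ≤ m := by lia
    · exact .inl rfl
    · exact .inr (srel_pow_eq_srel_pow le_rfl (by lia) ⟨m - 2, by lia⟩)
  · rintro (h | h) <;> rw [h, srel_pow_maj_nine_maj_six_iff] <;> decide
end
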